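/- arXiv:2010.00546 — 2 statements merged into one kernel-verified Lean document; each statement's English description precedes it below -/
import Mathlib

section
/- For every α ∈ (0,1], λ > 0 and μ ≥ 0, the Lévy–Khintchine integral with the Mittag-Leffler density as Lévy density evaluates to ∫_0^∞ (1 − e^{−τμ}) · λ τ^{α−1} E_{α,α}(−λ τ^α) dτ = μ^α/(λ + μ^α). -/
open MeasureTheory

/-- Two-parameter Mittag-Leffler function `E_{a,b}(z) = Σ_{m=0}^∞ z^m / Γ(a m + b)`. -/
noncomputable def mittagLeffler (a b z : ℝ) : ℝ :=
  ∑' m : ℕ, z ^ m / Real.Gamma (a * m + b)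

open Set Filter Topology

/-- An exponential lower bound for the Gamma function with arbitrarily large base. -/
theorem Real.rpow_mul_exp_neg_div_le_Gamma {y R : ℝ} (hy : 0 < y) (hR : 1 ≤ R) :
    R ^ y * (Real.exp (-(R + 1)) / (R + 1)) ≤ Real.Gamma y := by
  have hGam := Real.GammaIntegral_convergent hy
  have hsub : Ioc R (R + 1) ⊆ Ioi 0 := fun u hu => by
    have := hu.1
    simp only [mem_Ioi]
    linarith
  rw [Real.Gamma_eq_integral hy]
  calc R ^ y * (Real.exp (-(R + 1)) / (R + 1))
      = ∫ _ in Ioc R (R + 1), R ^ y * (Real.exp (-(R + 1)) / (R + 1)) := by simp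
    _ ≤ ∫ u in Ioc R (R + 1), Real.exp (-u) * u ^ (y - 1) := by
        refine setIntegral_mono_on (integrableOn_const (by simp)) (hGam.mono_set hsub)
          measurableSet_Ioc ?_
        intro u hu
        have hu0 : 0 < u := hsub hu
        rw [Real.rpow_sub_one hu0.ne']
        have h1 : R ^ y ≤ u ^ y := Real.rpow_le_rpow (by linarith) hu.1.le hy.le
        have h2 : Real.exp (-(R + 1)) ≤ Real.exp (-u) := Real.exp_le_exp.2 (by linarith [hu.2])
        calc R ^ y * (Real.exp (-(R + 1)) / (R + 1)) ≤ u ^ y * (Real.exp (-u) / u) := by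
              gcongr
              exact hu.2
          _ = _ := by ring
    _ ≤ ∫ u in Ioi 0, Real.exp (-u) * u ^ (y - 1) := by
        refine setIntegral_mono_set hGam ?_ hsub.eventuallyLE
        filter_upwards [ae_restrict_mem measurableSet_Ioi] with u hu
        have : (0 : ℝ) < u := hu
        simp only [Pi.zero_apply]
        positivity

theorem summable_mittagLeffler {a b : ℝ} (ha : 0 < a) (hb : 0 < b) (x : ℝ) :
    Summable fun m : ℕ => x ^ m / Real.Gamma (a * m + b) := by
  set R : ℝ := (2 * (|x| + 1)) ^ a⁻¹ with hRdef
  have hbase : 1 ≤ 2 * (|x| + 1) := by linarith [abs_nonneg x]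
  have hR : 1 ≤ R := Real.one_le_rpow hbase (by positivity)
  have hR0 : 0 < R := by linarith
  have hRa : R ^ a = 2 * (|x| + 1) := by
    rw [hRdef, ← Real.rpow_mul (by linarith), inv_mul_cancel₀ ha.ne', Real.rpow_one]
  set C : ℝ := R ^ b * (Real.exp (-(R + 1)) / (R + 1)) with hC
  have hC0 : 0 < C := by positivity
  refine Summable.of_norm_bounded (g := fun m : ℕ => C⁻¹ * (1 / 2) ^ m)
    (summable_geometric_two.mul_left _) fun m => ?_
  have hpos : 0 < a * m + b := by positivity
  have hG := Real.rpow_mul_exp_neg_div_le_Gamma hpos hR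
  have hsplit : R ^ (a * m + b) = (2 * (|x| + 1)) ^ m * R ^ b := by
    rw [Real.rpow_add hR0, Real.rpow_mul hR0.le, hRa, Real.rpow_natCast]
  rw [hsplit, mul_assoc, ← hC] at hG
  have hxm : |x| ^ m ≤ (|x| + 1) ^ m := by gcongr; linarith
  rw [norm_div, norm_pow, Real.norm_eq_abs, Real.norm_of_nonneg (Real.Gamma_pos_of_pos hpos).le,
    div_le_iff₀ (Real.Gamma_pos_of_pos hpos)]
  calc |x| ^ m ≤ (|x| + 1) ^ m := hxm
    _ = C⁻¹ * (1 / 2) ^ m * ((2 * (|x| + 1)) ^ m * C) := by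
        rw [mul_pow, one_div, inv_pow]
        field_simp
    _ ≤ _ := by gcongr

theorem analyticOnNhd_mittagLeffler {a b : ℝ} (ha : 0 < a) (hb : 0 < b) :
    AnalyticOnNhd ℝ (mittagLeffler a b) univ := by
  set c : ℕ → ℝ := fun m => (Real.Gamma (a * m + b))⁻¹
  have hrad : (FormalMultilinearSeries.ofScalars ℝ c).radius = ⊤ := by
    refine FormalMultilinearSeries.radius_eq_top_of_summable_norm _ fun r => ?_
    refine (summable_mittagLeffler ha hb r).congr fun m => ?_
    rw [FormalMultilinearSeries.ofScalars_norm, Real.norm_of_nonneg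
      (inv_nonneg.2 (Real.Gamma_pos_of_pos (by positivity)).le), div_eq_inv_mul]
  have hsum : mittagLeffler a b = (FormalMultilinearSeries.ofScalars ℝ c).sum := by
    ext x
    rw [mittagLeffler, FormalMultilinearSeries.sum]
    refine tsum_congr fun m => ?_
    rw [FormalMultilinearSeries.ofScalars_apply_eq, smul_eq_mul, div_eq_inv_mul]
  have h := (FormalMultilinearSeries.ofScalars ℝ c).hasFPowerSeriesOnBall (by simp [hrad])
  rw [hrad, ← hsum] at h
  intro x _
  exact h.analyticAt_of_mem (by simp)

theorem continuous_mittagLeffler {a b : ℝ} (ha : 0 < a) (hb : 0 < b) :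
    Continuous (mittagLeffler a b) :=
  continuousOn_univ.1 (analyticOnNhd_mittagLeffler ha hb).continuousOn

theorem mittagLeffler_zero (a b : ℝ) : mittagLeffler a b 0 = (Real.Gamma b)⁻¹ := by
  rw [mittagLeffler, tsum_eq_single 0 fun m hm => by simp [hm]]
  simp

/-- The Beta integral over `[0, x]`, for real exponents. -/
theorem integral_rpow_mul_sub_rpow {s t x : ℝ} (hs : 0 < s) (ht : 0 < t) (hx : 0 < x) :
    ∫ u in 0..x, u ^ (s - 1) * (x - u) ^ (t - 1) =
      x ^ (s + t - 1) * (Real.Gamma s * Real.Gamma t / Real.Gamma (s + t)) := by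
  have h := Complex.betaIntegral_scaled s t hx
  rw [Complex.betaIntegral_eq_Gamma_mul_div _ _ (by simpa) (by simpa)] at h
  apply Complex.ofReal_injective
  rw [← intervalIntegral.integral_ofReal]
  have hcongr : ∫ u in 0..x, ((u ^ (s - 1) * (x - u) ^ (t - 1) : ℝ) : ℂ) =
      ∫ u in 0..x, (u : ℂ) ^ ((s : ℂ) - 1) * ((x : ℂ) - u) ^ ((t : ℂ) - 1) := by
    refine intervalIntegral.integral_congr fun u hu => ?_
    rw [uIcc_of_le hx.le] at hu
    rw [Complex.ofReal_mul, Complex.ofReal_cpow hu.1, Complex.ofReal_cpow (by linarith [hu.2])]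
    push_cast
    rfl
  rw [hcongr, h]
  push_cast [Complex.ofReal_cpow hx.le, ← Complex.Gamma_ofReal]
  rfl

theorem intervalIntegrable_rpow_mul_sub_rpow {s t x : ℝ} (hs : 0 < s) (ht : 0 < t) (hx : 0 < x) :
    IntervalIntegrable (fun u => u ^ (s - 1) * (x - u) ^ (t - 1)) volume 0 x := by
  by_contra hcon
  have h := integral_rpow_mul_sub_rpow hs ht hx
  rw [intervalIntegral.integral_undef hcon] at h
  have := Real.Gamma_pos_of_pos hs
  have := Real.Gamma_pos_of_pos ht
  have := Real.Gamma_pos_of_pos (add_pos hs ht)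
  exact absurd h (ne_of_lt (by positivity))

/-- The Mittag-Leffler density with parameters `α` and `lam`. -/
noncomputable def mittagLefflerDensity (α lam τ : ℝ) : ℝ :=
  lam * τ ^ (α - 1) * mittagLeffler α α (-(lam * τ ^ α))

section Density

variable {α lam : ℝ}

theorem continuous_mittagLeffler_neg_mul_rpow (hα : 0 < α) :
    Continuous fun τ : ℝ => mittagLeffler α α (-(lam * τ ^ α)) :=
  (continuous_mittagLeffler hα hα).comp
    (continuous_const.mul (Real.continuous_rpow_const hα.le)).neg

theorem continuousOn_mittagLefflerDensity (hα : 0 < α) :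
    ContinuousOn (mittagLefflerDensity α lam) (Ioi 0) :=
  (continuousOn_const.mul (continuousOn_id.rpow_const fun _ hx => Or.inl (ne_of_gt hx))).mul
    (continuous_mittagLeffler_neg_mul_rpow hα).continuousOn

theorem intervalIntegrable_mittagLefflerDensity_mul (hα : 0 < α) {t : ℝ} (ht : 0 < t) :
    IntervalIntegrable (fun u => mittagLefflerDensity α lam u * (t - u) ^ (α - 1)) volume 0 t := by
  have h := ((intervalIntegrable_rpow_mul_sub_rpow hα hα ht).const_mul lam).mul_continuousOn
    (continuous_mittagLeffler_neg_mul_rpow (lam := lam) hα).continuousOn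
  refine h.congr fun u _ => ?_
  simp only [mittagLefflerDensity]
  ring

theorem mittagLefflerDensity_term (m : ℕ) {u : ℝ} (hu : 0 < u) :
    lam * u ^ (α - 1) * ((-(lam * u ^ α)) ^ m / Real.Gamma (α * m + α)) =
      (-1) ^ m * lam ^ (m + 1) / Real.Gamma (α * m + α) * u ^ (α * m + α - 1) := by
  have h : u ^ (α * m + α - 1) = u ^ (α - 1) * (u ^ α) ^ m := by
    rw [← Real.rpow_natCast (u ^ α), ← Real.rpow_mul hu.le, ← Real.rpow_add hu]
    ring_nf
  rw [h, neg_pow, mul_pow]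
  ring

theorem hasSum_mittagLefflerDensity (hα : 0 < α) {u : ℝ} (hu : 0 < u) :
    HasSum (fun m : ℕ =>
      (-1) ^ m * lam ^ (m + 1) / Real.Gamma (α * m + α) * u ^ (α * m + α - 1))
      (mittagLefflerDensity α lam u) := by
  have h := (summable_mittagLeffler hα hα (-(lam * u ^ α))).hasSum.mul_left (lam * u ^ (α - 1))
  simp_rw [mittagLefflerDensity_term _ hu] at h
  exact h

/-- The Mittag-Leffler density solves a Volterra equation with a power kernel. -/
theorem mittagLefflerDensity_volterra (hα : 0 < α) (hlam : 0 < lam) {t : ℝ} (ht : 0 < t) :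
    mittagLefflerDensity α lam t = lam / Real.Gamma α *
      (t ^ (α - 1) - ∫ u in 0..t, mittagLefflerDensity α lam u * (t - u) ^ (α - 1)) := by
  have hΓ := Real.Gamma_pos_of_pos hα
  have hΓm (m : ℕ) : 0 < Real.Gamma (α * m + α) := Real.Gamma_pos_of_pos (by positivity)
  set c : ℕ → ℝ := fun m => (-1) ^ m * lam ^ (m + 1) / Real.Gamma (α * m + α) with hc
  set F : ℕ → ℝ → ℝ := fun m u => c m * (u ^ (α * m + α - 1) * (t - u) ^ (α - 1)) with hF
  have hmα (m : ℕ) : 0 < α * m + α := by positivity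
  have hFint (m : ℕ) : Integrable (F m) (volume.restrict (Ioc 0 t)) :=
    ((intervalIntegrable_iff_integrableOn_Ioc_of_le ht.le).1
      (intervalIntegrable_rpow_mul_sub_rpow (hmα m) hα ht)).const_mul (c m)
  have hshift (m : ℕ) : α * m + α + α = α * (m + 1 : ℕ) + α := by push_cast; ring
  have hval (m : ℕ) : ∫ u in Ioc 0 t, u ^ (α * m + α - 1) * (t - u) ^ (α - 1) =
      t ^ (α * (m + 1 : ℕ) + α - 1) *
        (Real.Gamma (α * m + α) * Real.Gamma α / Real.Gamma (α * (m + 1 : ℕ) + α)) := by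
    rw [← intervalIntegral.integral_of_le ht.le, integral_rpow_mul_sub_rpow (hmα m) hα ht, hshift]
  have hnorm (m : ℕ) : ∫ u in Ioc 0 t, ‖F m u‖ =
      |c m| * ∫ u in Ioc 0 t, u ^ (α * m + α - 1) * (t - u) ^ (α - 1) := by
    rw [← integral_const_mul]
    refine setIntegral_congr_fun measurableSet_Ioc fun u hu => ?_
    have h1 : 0 < u := hu.1
    have h2 : 0 ≤ t - u := by linarith [hu.2]
    simp only [hF]
    rw [norm_mul, Real.norm_eq_abs, Real.norm_of_nonneg (by positivity)]
  have hFval (m : ℕ) : ∫ u in Ioc 0 t, F m u =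
      -(Real.Gamma α / lam) * (c (m + 1) * t ^ (α * (m + 1 : ℕ) + α - 1)) := by
    simp only [hF]
    rw [integral_const_mul, hval]
    simp only [hc]
    have := (hΓm m).ne'
    have := (hΓm (m + 1)).ne'
    field_simp
    ring
  have hsum := hasSum_mittagLefflerDensity (lam := lam) hα ht
  have hFsum : Summable fun m => ∫ u in Ioc 0 t, ‖F m u‖ := by
    have h := (((summable_nat_add_iff 1).2 hsum.summable).mul_left (-(Real.Gamma α / lam))).norm
    refine h.congr fun m => ?_
    have h3 := hFval m
    simp only [hF] at h3
    rw [integral_const_mul] at h3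
    change ‖-(Real.Gamma α / lam) * (c (m + 1) * t ^ (α * (m + 1 : ℕ) + α - 1))‖ = _
    rw [← h3, hnorm, norm_mul, Real.norm_eq_abs, Real.norm_of_nonneg]
    rw [hval]
    have := hΓm m
    have := hΓm (m + 1)
    positivity
  have hI := hasSum_integral_of_summable_integral_norm hFint hFsum
  simp_rw [hFval] at hI
  have hlim : ∫ u in Ioc 0 t, ∑' m, F m u =
      ∫ u in 0..t, mittagLefflerDensity α lam u * (t - u) ^ (α - 1) := by
    rw [intervalIntegral.integral_of_le ht.le]
    refine setIntegral_congr_fun measurableSet_Ioc fun u hu => ?_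
    simp only [hF]
    simp_rw [← mul_assoc]
    rw [tsum_mul_right, (hasSum_mittagLefflerDensity hα hu.1).tsum_eq]
  rw [hlim] at hI
  have hI2 := ((hasSum_nat_add_iff' 1).2 hsum).mul_left (-(Real.Gamma α / lam))
  have heq := hI.unique hI2
  rw [heq]
  simp
  field_simp
  ring

theorem mittagLefflerDensity_nonneg_of_mittagLeffler_nonneg (hlam : 0 < lam) {t : ℝ} (ht : 0 ≤ t)
    (h : 0 ≤ mittagLeffler α α (-(lam * t ^ α))) : 0 ≤ mittagLefflerDensity α lam t :=
  mul_nonneg (by positivity) h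

/-- Nonnegativity propagates: if the Mittag-Leffler density is nonnegative on `(0, t₀]`, then it
cannot be negative throughout `(t₀, t₁]`. -/
theorem mittagLefflerDensity_nonneg_of_nonneg_of_nonpos (hα : α ∈ Ioc (0 : ℝ) 1) (hlam : 0 < lam)
    {t₀ t₁ : ℝ} (ht₀ : 0 < t₀) (ht : t₀ ≤ t₁)
    (hpos : ∀ t ∈ Ioc 0 t₀, 0 ≤ mittagLefflerDensity α lam t)
    (hneg : ∀ t ∈ Ioc t₀ t₁, mittagLefflerDensity α lam t ≤ 0) :
    0 ≤ mittagLefflerDensity α lam t₁ := by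
  have ht₁ : 0 < t₁ := ht₀.trans_le ht
  have hΓ := Real.Gamma_pos_of_pos hα.1
  have hc : 0 < lam / Real.Gamma α := by positivity
  have hconv₀ := intervalIntegrable_mittagLefflerDensity_mul (lam := lam) hα.1 ht₀
  have hconv₁ := intervalIntegrable_mittagLefflerDensity_mul (lam := lam) hα.1 ht₁
  have hleft : IntervalIntegrable
      (fun u => mittagLefflerDensity α lam u * (t₁ - u) ^ (α - 1)) volume 0 t₀ :=
    hconv₁.mono_set (by
      rw [uIcc_of_le ht₀.le, uIcc_of_le ht₁.le]
      exact Icc_subset_Icc_right ht)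
  have hright : IntervalIntegrable
      (fun u => mittagLefflerDensity α lam u * (t₁ - u) ^ (α - 1)) volume t₀ t₁ :=
    hconv₁.mono_set (by
      rw [uIcc_of_le ht, uIcc_of_le ht₁.le]
      exact Icc_subset_Icc_left ht₀.le)
  have hV₀ : ∫ u in 0..t₀, mittagLefflerDensity α lam u * (t₀ - u) ^ (α - 1) ≤ t₀ ^ (α - 1) := by
    have h := hpos t₀ ⟨ht₀, le_rfl⟩
    rw [mittagLefflerDensity_volterra hα.1 hlam ht₀] at h
    linarith [nonneg_of_mul_nonneg_right h hc]
  have hI₀ : ∫ u in 0..t₀, mittagLefflerDensity α lam u * (t₁ - u) ^ (α - 1) ≤ t₁ ^ (α - 1) := by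
    calc ∫ u in 0..t₀, mittagLefflerDensity α lam u * (t₁ - u) ^ (α - 1)
        ≤ ∫ u in 0..t₀, (t₁ / t₀) ^ (α - 1) *
            (mittagLefflerDensity α lam u * (t₀ - u) ^ (α - 1)) := by
          refine intervalIntegral.integral_mono_on_of_le_Ioo ht₀.le hleft
            (hconv₀.const_mul _) fun u hu => ?_
          have hu₀ : 0 < t₀ - u := by linarith [hu.2]
          have hkey : (t₁ - u) ^ (α - 1) ≤ (t₁ / t₀) ^ (α - 1) * (t₀ - u) ^ (α - 1) := by
            rw [← Real.mul_rpow (by positivity) hu₀.le]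
            refine Real.rpow_le_rpow_of_nonpos (by positivity) ?_ (by linarith [hα.2])
            rw [div_mul_eq_mul_div, div_le_iff₀ ht₀]
            nlinarith [hu.1]
          calc _ ≤ mittagLefflerDensity α lam u * ((t₁ / t₀) ^ (α - 1) * (t₀ - u) ^ (α - 1)) :=
                mul_le_mul_of_nonneg_left hkey (hpos u ⟨hu.1, hu.2.le⟩)
            _ = _ := by ring
      _ ≤ (t₁ / t₀) ^ (α - 1) * t₀ ^ (α - 1) := by
          rw [intervalIntegral.integral_const_mul]
          gcongr
      _ = t₁ ^ (α - 1) := by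
          rw [← Real.mul_rpow (by positivity) ht₀.le, div_mul_cancel₀ _ ht₀.ne']
  have hI₁ : ∫ u in t₀..t₁, mittagLefflerDensity α lam u * (t₁ - u) ^ (α - 1) ≤ 0 := by
    rw [intervalIntegral.integral_of_le ht]
    refine setIntegral_nonpos measurableSet_Ioc fun u hu => ?_
    exact mul_nonpos_of_nonpos_of_nonneg (hneg u hu)
      (Real.rpow_nonneg (by linarith [hu.2]) _)
  rw [mittagLefflerDensity_volterra hα.1 hlam ht₁,
    ← intervalIntegral.integral_add_adjacent_intervals hleft hright]
  exact mul_nonneg hc.le (by linarith)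

theorem eventually_mittagLeffler_ne_zero (hα : 0 < α) (hlam : 0 < lam) {t₀ : ℝ} (ht₀ : 0 ≤ t₀) :
    ∀ᶠ t in 𝓝[>] t₀, mittagLeffler α α (-(lam * t ^ α)) ≠ 0 := by
  have han := analyticOnNhd_mittagLeffler hα hα
  have hne : ∀ᶠ z in 𝓝[≠] (-(lam * t₀ ^ α)), mittagLeffler α α z ≠ 0 := by
    by_contra hcon
    have h0 := han.eqOn_zero_of_preconnected_of_frequently_eq_zero isPreconnected_univ
      (mem_univ _) ((not_eventually.1 hcon).mono fun _ => not_not.1) (mem_univ 0)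
    rw [mittagLeffler_zero, Pi.zero_apply, inv_eq_zero] at h0
    exact (Real.Gamma_pos_of_pos hα).ne' h0
  have hcont : Continuous fun t : ℝ => -(lam * t ^ α) :=
    (continuous_const.mul (Real.continuous_rpow_const hα.le)).neg
  have hlim : Tendsto (fun t : ℝ => -(lam * t ^ α)) (𝓝[>] t₀) (𝓝[≠] (-(lam * t₀ ^ α))) := by
    refine tendsto_nhdsWithin_iff.2 ⟨(hcont.tendsto t₀).mono_left nhdsWithin_le_nhds, ?_⟩
    filter_upwards [self_mem_nhdsWithin] with t ht
    have h := mul_lt_mul_of_pos_left (Real.rpow_lt_rpow ht₀ ht hα) hlam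
    simp only [mem_compl_iff, mem_singleton_iff]
    linarith
  exact hlim.eventually hne

theorem mittagLeffler_neg_mul_rpow_nonneg (hα : α ∈ Ioc (0 : ℝ) 1) (hlam : 0 < lam) {t : ℝ}
    (ht : 0 ≤ t) : 0 ≤ mittagLeffler α α (-(lam * t ^ α)) := by
  set g : ℝ → ℝ := fun t => mittagLeffler α α (-(lam * t ^ α)) with hg
  have hgc : Continuous g := continuous_mittagLeffler_neg_mul_rpow hα.1
  by_contra! hcon
  set S : Set ℝ := {t | 0 ≤ t ∧ g t < 0} with hS
  have hSne : S.Nonempty := ⟨t, ht, hcon⟩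
  have hSbdd : BddBelow S := ⟨0, fun _ h => h.1⟩
  set t₀ := sInf S with ht₀def
  have ht₀ : 0 ≤ t₀ := le_csInf hSne fun _ h => h.1
  have hbelow : ∀ u, 0 ≤ u → u < t₀ → 0 ≤ g u := fun u hu hlt => by
    by_contra! h
    exact absurd (csInf_le hSbdd ⟨hu, h⟩) (not_le.2 hlt)
  have ht₀pos : 0 < t₀ := by
    refine ht₀.lt_of_ne fun h0 => ?_
    have hle : g t₀ ≤ 0 :=
      closure_minimal (fun u hu => hu.2.le) (isClosed_le hgc continuous_const)
        (csInf_mem_closure hSne hSbdd)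
    have hg0 : g 0 = (Real.Gamma α)⁻¹ := by
      simp [hg, Real.zero_rpow hα.1.ne', mittagLeffler_zero]
    rw [← h0, hg0] at hle
    have := Real.Gamma_pos_of_pos hα.1
    exact absurd hle (not_le.2 (by positivity))
  have hgt₀ : 0 ≤ g t₀ := by
    refine ge_of_tendsto ((hgc.tendsto t₀).mono_left (nhdsWithin_le_nhds (s := Iio t₀))) ?_
    filter_upwards [Ioo_mem_nhdsLT ht₀pos] with u hu using hbelow u hu.1.le hu.2
  obtain ⟨b, hb, hbne⟩ := (mem_nhdsGT_iff_exists_Ioo_subset).1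
    (eventually_mittagLeffler_ne_zero hα.1 hlam ht₀)
  obtain ⟨t₁, ht₁S, ht₁b⟩ := exists_lt_of_csInf_lt hSne (show sInf S < b from hb)
  have ht₁ : t₀ < t₁ := by
    refine (csInf_le hSbdd ht₁S).lt_of_ne fun h => ?_
    have := ht₁S.2
    rw [← h] at this
    exact absurd hgt₀ (not_le.2 this)
  have hneg : ∀ u ∈ Ioc t₀ t₁, g u ≤ 0 := fun u hu => by
    by_contra! hpos
    obtain ⟨v, hv, hv0⟩ := intermediate_value_Icc' hu.2 hgc.continuousOn ⟨ht₁S.2.le, hpos.le⟩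
    exact hbne ⟨hu.1.trans_le hv.1, hv.2.trans_lt ht₁b⟩ hv0
  have hfinal := mittagLefflerDensity_nonneg_of_nonneg_of_nonpos hα hlam ht₀pos ht₁.le
    (fun u hu => mittagLefflerDensity_nonneg_of_mittagLeffler_nonneg hlam hu.1.le <|
      hu.2.lt_or_eq.elim (hbelow u hu.1.le) fun h => h ▸ hgt₀)
    (fun u hu => mul_nonpos_of_nonneg_of_nonpos
      (have := ht₀pos.trans hu.1; by positivity) (hneg u hu))
  have ht₁pos : 0 < t₁ := ht₀pos.trans ht₁
  exact absurd hfinal (not_le.2 (mul_neg_of_pos_of_neg (by positivity) ht₁S.2))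

theorem mittagLefflerDensity_nonneg (hα : α ∈ Ioc (0 : ℝ) 1) (hlam : 0 < lam) {t : ℝ}
    (ht : 0 ≤ t) : 0 ≤ mittagLefflerDensity α lam t :=
  mittagLefflerDensity_nonneg_of_mittagLeffler_nonneg hlam ht
    (mittagLeffler_neg_mul_rpow_nonneg hα hlam ht)

theorem mittagLefflerDensity_le (hα : α ∈ Ioc (0 : ℝ) 1) (hlam : 0 < lam) {t : ℝ} (ht : 0 < t) :
    mittagLefflerDensity α lam t ≤ lam / Real.Gamma α * t ^ (α - 1) := by
  have hΓ := Real.Gamma_pos_of_pos hα.1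
  rw [mittagLefflerDensity_volterra hα.1 hlam ht]
  gcongr
  rw [sub_le_self_iff]
  refine intervalIntegral.integral_nonneg ht.le fun u hu => ?_
  exact mul_nonneg (mittagLefflerDensity_nonneg hα hlam hu.1)
    (Real.rpow_nonneg (by linarith [hu.2]) _)

theorem integrableOn_exp_mul_rpow (hα : 0 < α) {s : ℝ} (hs : 0 < s) :
    IntegrableOn (fun t => Real.exp (-(s * t)) * t ^ (α - 1)) (Ioi 0) := by
  refine (integrableOn_rpow_mul_exp_neg_mul_rpow (p := 1) (s := α - 1) (b := s)
    (by linarith) one_pos hs).congr_fun (fun t _ => ?_) measurableSet_Ioi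
  simp only [Real.rpow_one]
  rw [mul_comm, neg_mul]

theorem integrableOn_exp_mul_mittagLefflerDensity (hα : α ∈ Ioc (0 : ℝ) 1) (hlam : 0 < lam)
    {s : ℝ} (hs : 0 < s) :
    IntegrableOn (fun t => Real.exp (-(s * t)) * mittagLefflerDensity α lam t) (Ioi 0) := by
  refine ((integrableOn_exp_mul_rpow hα.1 hs).const_mul (lam / Real.Gamma α)).mono' ?_ ?_
  · exact ((Continuous.continuousOn (by fun_prop)).mul
      (continuousOn_mittagLefflerDensity hα.1)).aestronglyMeasurable measurableSet_Ioi
  · filter_upwards [ae_restrict_mem measurableSet_Ioi] with t ht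
    rw [Real.norm_of_nonneg (mul_nonneg (Real.exp_pos _).le
      (mittagLefflerDensity_nonneg hα hlam (le_of_lt ht))), mul_left_comm]
    exact mul_le_mul_of_nonneg_left (mittagLefflerDensity_le hα hlam ht) (Real.exp_pos _).le

/-- The Laplace transform of the Mittag-Leffler density. -/
theorem integral_exp_mul_mittagLefflerDensity (hα : α ∈ Ioc (0 : ℝ) 1) (hlam : 0 < lam)
    {s : ℝ} (hs : 0 < s) :
    ∫ t in Ioi 0, Real.exp (-(s * t)) * mittagLefflerDensity α lam t = lam / (lam + s ^ α) := by
  have hΓ := Real.Gamma_pos_of_pos hα.1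
  have hk := integrableOn_exp_mul_rpow hα.1 hs
  have hf := integrableOn_exp_mul_mittagLefflerDensity hα hlam hs
  have hkval : ∫ t in Ioi 0, Real.exp (-(s * t)) * t ^ (α - 1) = Real.Gamma α / s ^ α := by
    simp_rw [mul_comm (Real.exp _)]
    rw [Real.integral_rpow_mul_exp_neg_mul_Ioi hα.1 hs, Real.div_rpow zero_le_one hs.le,
      Real.one_rpow]
    ring
  have hconv := integral_posConvolution hf hk (ContinuousLinearMap.mul ℝ ℝ)
  have hconvint := (integrable_posConvolution hf hk (ContinuousLinearMap.mul ℝ ℝ)).integrableOn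
    (s := Ioi 0)
  simp only [ContinuousLinearMap.mul_apply'] at hconv
  set J : ℝ := ∫ t in Ioi 0, Real.exp (-(s * t)) * mittagLefflerDensity α lam t with hJ
  set conv : ℝ → ℝ := fun x => ∫ t in 0..x, Real.exp (-(s * t)) * mittagLefflerDensity α lam t *
    (Real.exp (-(s * (x - t))) * (x - t) ^ (α - 1)) with hconvdef
  have hconvint' : IntegrableOn conv (Ioi 0) := by
    refine hconvint.congr_fun (fun x hx => ?_) measurableSet_Ioi
    rw [posConvolution, indicator_of_mem hx]
    rfl
  have hpoint : ∀ x ∈ Ioi (0 : ℝ), Real.exp (-(s * x)) * mittagLefflerDensity α lam x =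
      lam / Real.Gamma α * (Real.exp (-(s * x)) * x ^ (α - 1) - conv x) := fun x hx => by
    have hc : conv x = Real.exp (-(s * x)) *
        ∫ u in 0..x, mittagLefflerDensity α lam u * (x - u) ^ (α - 1) := by
      rw [← intervalIntegral.integral_const_mul]
      refine intervalIntegral.integral_congr fun u _ => ?_
      have : Real.exp (-(s * x)) = Real.exp (-(s * u)) * Real.exp (-(s * (x - u))) := by
        rw [← Real.exp_add]
        ring_nf
      simp only [this]
      ring
    rw [hc, mittagLefflerDensity_volterra hα.1 hlam hx]
    ring
  have hJeq : J = lam / Real.Gamma α * (Real.Gamma α / s ^ α - J * (Real.Gamma α / s ^ α)) := by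
    conv_lhs => rw [hJ, setIntegral_congr_fun measurableSet_Ioi hpoint, integral_const_mul,
      integral_sub hk hconvint', hkval, hconv, hkval]
  have hsα : 0 < s ^ α := Real.rpow_pos_of_pos hs α
  rw [eq_div_iff (by positivity)]
  field_simp at hJeq
  linarith

theorem integral_exp_mul_mittagLefflerDensity_le_one (hα : α ∈ Ioc (0 : ℝ) 1) (hlam : 0 < lam)
    {s : ℝ} (hs : 0 < s) :
    ∫ t in Ioi 0, Real.exp (-(s * t)) * mittagLefflerDensity α lam t ≤ 1 := by
  rw [integral_exp_mul_mittagLefflerDensity hα hlam hs]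
  have := Real.rpow_pos_of_pos hs α
  exact div_le_one_of_le₀ (by linarith) (by positivity)

theorem tendsto_exp_mul_mittagLefflerDensity (t : ℝ) :
    Tendsto (fun n : ℕ => Real.exp (-(1 / ((n : ℝ) + 1) * t)) * mittagLefflerDensity α lam t)
      atTop (𝓝 (mittagLefflerDensity α lam t)) := by
  have h := (tendsto_one_div_add_atTop_nhds_zero_nat (𝕜 := ℝ)).mul_const t
  simpa using ((Real.continuous_exp.tendsto _).comp h.neg).mul_const (mittagLefflerDensity α lam t)

theorem integrableOn_mittagLefflerDensity (hα : α ∈ Ioc (0 : ℝ) 1) (hlam : 0 < lam) :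
    IntegrableOn (mittagLefflerDensity α lam) (Ioi 0) := by
  have hn (n : ℕ) : 0 < 1 / ((n : ℝ) + 1) := Nat.one_div_pos_of_nat
  refine integrable_of_tendsto (ae_of_all _ tendsto_exp_mul_mittagLefflerDensity)
    (fun n => (integrableOn_exp_mul_mittagLefflerDensity hα hlam (hn n)).1) ?_
  refine ne_top_of_le_ne_top ENNReal.one_ne_top (liminf_le_of_le (by isBoundedDefault) ?_)
  intro b hb
  obtain ⟨n, hbn⟩ := hb.exists
  refine hbn.trans ?_
  rw [← ofReal_integral_norm_eq_lintegral_enorm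
    (integrableOn_exp_mul_mittagLefflerDensity hα hlam (hn n)), ENNReal.ofReal_le_one]
  refine le_of_eq_of_le (setIntegral_congr_fun measurableSet_Ioi fun t ht => ?_)
    (integral_exp_mul_mittagLefflerDensity_le_one hα hlam (hn n))
  exact Real.norm_of_nonneg (mul_nonneg (Real.exp_pos _).le
      (mittagLefflerDensity_nonneg hα hlam (le_of_lt ht)))

/-- The Mittag-Leffler density has total mass one. -/
theorem integral_mittagLefflerDensity (hα : α ∈ Ioc (0 : ℝ) 1) (hlam : 0 < lam) :
    ∫ t in Ioi 0, mittagLefflerDensity α lam t = 1 := by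
  have hn (n : ℕ) : 0 < 1 / ((n : ℝ) + 1) := Nat.one_div_pos_of_nat
  have hlim := tendsto_integral_of_dominated_convergence (mittagLefflerDensity α lam)
    (fun n : ℕ => (integrableOn_exp_mul_mittagLefflerDensity hα hlam (hn n)).1)
    (integrableOn_mittagLefflerDensity hα hlam)
    (fun n => by
      filter_upwards [ae_restrict_mem measurableSet_Ioi] with t ht
      have ht0 : (0 : ℝ) < t := ht
      have hnn := mittagLefflerDensity_nonneg hα hlam ht0.le
      rw [Real.norm_of_nonneg (mul_nonneg (Real.exp_pos _).le hnn)]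
      refine mul_le_of_le_one_left hnn (Real.exp_le_one_iff.2 ?_)
      have := mul_pos (hn n) ht0
      linarith)
    (ae_of_all _ tendsto_exp_mul_mittagLefflerDensity)
  simp_rw [integral_exp_mul_mittagLefflerDensity hα hlam (hn _)] at hlim
  refine tendsto_nhds_unique hlim ?_
  have h := ((Real.continuous_rpow_const hα.1.le).tendsto 0).comp
    (tendsto_one_div_add_atTop_nhds_zero_nat (𝕜 := ℝ))
  rw [Real.zero_rpow hα.1.ne'] at h
  have h2 := (tendsto_const_nhds (x := lam)).div (h.const_add lam) (by simpa using hlam.ne')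
  rwa [add_zero, div_self hlam.ne'] at h2

end Density

/-- For `α ∈ (0,1]`, `λ > 0`, `μ ≥ 0`, the Lévy–Khintchine integral with the
Mittag-Leffler density as Lévy density:
`∫_0^∞ (1 − e^{−τμ}) λ τ^{α−1} E_{α,α}(−λ τ^α) dτ = μ^α/(λ + μ^α)`. -/
theorem mittagLeffler_levy_khintchine (α lam μ : ℝ)
    (hα : α ∈ Set.Ioc (0 : ℝ) 1) (hlam : 0 < lam) (hμ : 0 ≤ μ) :
    (∫ τ in Set.Ioi (0 : ℝ),
        (1 - Real.exp (-(τ * μ))) * (lam * τ ^ (α - 1) * mittagLeffler α α (-(lam * τ ^ α))))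
      = μ ^ α / (lam + μ ^ α) := by
  rcases hμ.eq_or_lt with rfl | hμ
  · simp [Real.zero_rpow hα.1.ne']
  have hsα : 0 < μ ^ α := Real.rpow_pos_of_pos hμ α
  calc _ = ∫ t in Set.Ioi (0 : ℝ), (mittagLefflerDensity α lam t -
          Real.exp (-(μ * t)) * mittagLefflerDensity α lam t) := by
        refine integral_congr_ae (ae_of_all _ fun t => ?_)
        simp only [mittagLefflerDensity, mul_comm t μ]
        ring
    _ = 1 - lam / (lam + μ ^ α) := by
        rw [integral_sub (integrableOn_mittagLefflerDensity hα hlam)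
          (integrableOn_exp_mul_mittagLefflerDensity hα hlam hμ),
          integral_mittagLefflerDensity hα hlam,
          integral_exp_mul_mittagLefflerDensity hα hlam hμ]
    _ = μ ^ α / (lam + μ ^ α) := by
        field_simp
        ring
end

section
/- Let α, β ∈ (0,1], ξ > 0, t ≥ 0 and n ≥ 0 an integer. Then the series Σ_{m=0}^∞ (−ξ t^β)^m / Γ(βm + 1) · ∏_{j=0}^{n−1} (αm − j) converges absolutely, and the n-th Taylor coefficient at u = 0 of the function u ↦ E_β(−ξ t^β (1−u)^α) equals ((−1)^n/n!) Σ_{m=0}^∞ (−ξ t^β)^m / Γ(βm + 1) · ∏_{j=0}^{n−1} (αm − j); these are the state probabilities of the space-time fractional Poisson process. -/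
/-- Mittag-Leffler function `E_β(z) = Σ_{m=0}^∞ z^m / Γ(β m + 1)`. -/
noncomputable def mittagLefflerOne (β z : ℝ) : ℝ :=
  ∑' m : ℕ, z ^ m / Real.Gamma (β * m + 1)

open Set MeasureTheory

/-- `Γ` outgrows every exponential. -/
theorem Real.rpow_mul_exp_neg_le_Gamma {R x : ℝ} (hR : 0 ≤ R) (hx : 0 ≤ x) :
    R ^ x * Real.exp (-R) ≤ Real.Gamma (x + 1) := by
  have hint : IntegrableOn (fun y : ℝ => Real.exp (-y) * y ^ (x + 1 - 1)) (Ioi 0) :=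
    Real.GammaIntegral_convergent (by linarith)
  have hsub : Ioi R ⊆ Ioi (0 : ℝ) := Ioi_subset_Ioi hR
  rw [Real.Gamma_eq_integral (by linarith)]
  calc R ^ x * Real.exp (-R) = ∫ y in Ioi R, Real.exp (-y) * R ^ x := by
        rw [integral_mul_const, integral_exp_neg_Ioi, mul_comm]
    _ ≤ ∫ y in Ioi R, Real.exp (-y) * y ^ (x + 1 - 1) := by
        refine setIntegral_mono_on ((integrableOn_exp_neg_Ioi R).mul_const _)
          (hint.mono_set hsub) measurableSet_Ioi fun y hy => ?_
        rw [add_sub_cancel_right]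
        have hRy : R ≤ y := le_of_lt hy
        gcongr
    _ ≤ ∫ y in Ioi 0, Real.exp (-y) * y ^ (x + 1 - 1) := by
        refine setIntegral_mono_set hint ?_ hsub.eventuallyLE
        filter_upwards [self_mem_ae_restrict measurableSet_Ioi] with y hy
        have : (0 : ℝ) < y := hy
        simp only [Pi.zero_apply]
        positivity

theorem summable_pow_div_Gamma {β : ℝ} (hβ : 0 < β) (r : ℝ) :
    Summable fun m : ℕ => r ^ m / Real.Gamma (β * m + 1) := by
  set R : ℝ := (2 * (|r| + 1)) ^ β⁻¹ with hR
  have hbase : 0 < 2 * (|r| + 1) := by positivity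
  have hRpos : 0 < R := Real.rpow_pos_of_pos hbase _
  refine Summable.of_norm_bounded
    (summable_geometric_two.mul_left (Real.exp R)) fun m => ?_
  have hβm : 0 ≤ β * m := by positivity
  have hΓ : 0 < Real.Gamma (β * m + 1) := Real.Gamma_pos_of_pos (by linarith)
  have hle := Real.rpow_mul_exp_neg_le_Gamma hRpos.le hβm
  have hpow : R ^ (β * m) = (2 * (|r| + 1)) ^ m := by
    rw [hR, ← Real.rpow_mul hbase.le, inv_mul_cancel_left₀ hβ.ne', Real.rpow_natCast]
  rw [hpow] at hle
  rw [norm_div, norm_pow, Real.norm_eq_abs, Real.norm_of_nonneg hΓ.le, div_le_iff₀ hΓ]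
  calc |r| ^ m ≤ (|r| + 1) ^ m := by gcongr; linarith
    _ = Real.exp R * (1 / 2) ^ m * ((2 * (|r| + 1)) ^ m * Real.exp (-R)) := by
        rw [mul_pow, Real.exp_neg, div_pow, one_pow]
        field_simp
    _ ≤ Real.exp R * (1 / 2) ^ m * Real.Gamma (β * m + 1) := by gcongr

theorem abs_prod_range_mul_sub_le {α : ℝ} (hα : α ∈ Icc (0 : ℝ) 1) (k m : ℕ) :
    |∏ j ∈ Finset.range k, (α * (m : ℝ) - (j : ℝ))| ≤
      k.factorial * Real.exp k * Real.exp 1 ^ m := by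
  have hαm : 0 ≤ α * m := mul_nonneg hα.1 m.cast_nonneg
  have hαm' : α * m ≤ m := mul_le_of_le_one_left m.cast_nonneg hα.2
  have hprod : |∏ j ∈ Finset.range k, (α * (m : ℝ) - (j : ℝ))| ≤ ((m : ℝ) + k) ^ k := by
    rw [Finset.abs_prod]
    refine (Finset.prod_le_prod (g := fun _ => (m : ℝ) + k) (fun _ _ => abs_nonneg _)
      fun j hj => ?_).trans_eq (by simp)
    have hjk : (j : ℝ) ≤ k := by exact_mod_cast (Finset.mem_range.mp hj).le
    have hj0 : (0 : ℝ) ≤ j := j.cast_nonneg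
    have hm0 : (0 : ℝ) ≤ m := m.cast_nonneg
    exact abs_le.mpr ⟨by linarith, by linarith⟩
  have hexp := Real.pow_div_factorial_le_exp ((m : ℝ) + k) (by positivity) k
  rw [div_le_iff₀ (by positivity), Real.exp_add] at hexp
  rw [← Real.exp_nat_mul, mul_one]
  linarith

section GeneralizedBinomialSeries

variable {α : ℝ} {a : ℕ → ℝ}

theorem summable_abs_mul_prod_range (hα : α ∈ Icc (0 : ℝ) 1)
    (ha : ∀ r : ℝ, Summable fun m => |a m| * r ^ m) (k : ℕ) :
    Summable fun m : ℕ => |a m * ∏ j ∈ Finset.range k, (α * (m : ℝ) - (j : ℝ))| := by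
  refine Summable.of_nonneg_of_le (fun _ => abs_nonneg _) (fun m => ?_)
    ((ha (Real.exp 1)).mul_left (k.factorial * Real.exp k))
  rw [abs_mul]
  calc _ ≤ |a m| * (k.factorial * Real.exp k * Real.exp 1 ^ m) := by
        gcongr; exact abs_prod_range_mul_sub_le hα k m
    _ = _ := by ring

theorem abs_rpow_mul_sub_natCast_le {x : ℝ} (hα : α ∈ Icc (0 : ℝ) 1) (hx : x ∈ Ioo (1 / 2 : ℝ) 2)
    (k m : ℕ) : |x ^ (α * m - k)| ≤ 2 ^ k * 2 ^ m := by
  have hx0 : 0 < x := by linarith [hx.1]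
  have hαm : 0 ≤ α * m := mul_nonneg hα.1 m.cast_nonneg
  have hαm' : α * m ≤ m := mul_le_of_le_one_left m.cast_nonneg hα.2
  rw [abs_of_pos (Real.rpow_pos_of_pos hx0 _), Real.rpow_sub hx0, Real.rpow_natCast,
    div_eq_inv_mul, ← inv_pow]
  have hinv : x⁻¹ ≤ 2 := by
    rw [inv_le_comm₀ hx0 two_pos]; linarith [hx.1]
  have hpow : x ^ (α * m) ≤ 2 ^ m :=
    calc x ^ (α * m) ≤ 2 ^ (α * m) := Real.rpow_le_rpow hx0.le hx.2.le hαm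
      _ ≤ 2 ^ (m : ℝ) := Real.rpow_le_rpow_of_exponent_le one_le_two hαm'
      _ = 2 ^ m := Real.rpow_natCast _ _
  gcongr

/-- Termwise differentiation of `∑ aₘ (1 - u)^(αm)`, for the `k`-th derivative of the series. -/
theorem hasDerivAt_tsum_mul_prod_range_mul_rpow (hα : α ∈ Icc (0 : ℝ) 1)
    (ha : ∀ r : ℝ, Summable fun m => |a m| * r ^ m) (k : ℕ) {u : ℝ}
    (hu : u ∈ Ioo (-1 : ℝ) (1 / 2)) :
    HasDerivAt
      (fun v : ℝ => ∑' m : ℕ, (-1) ^ k * (a m * ∏ j ∈ Finset.range k, (α * (m : ℝ) - (j : ℝ))) *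
        (1 - v) ^ (α * m - k))
      (∑' m : ℕ, (-1) ^ (k + 1) *
        (a m * ∏ j ∈ Finset.range (k + 1), (α * (m : ℝ) - (j : ℝ))) *
        (1 - u) ^ (α * m - (k + 1 : ℕ))) u := by
  have hbound : Summable fun m : ℕ => (k + 1).factorial * Real.exp (k + 1 : ℕ) * 2 ^ (k + 1) *
      (|a m| * (Real.exp 1 * 2) ^ m) := (ha _).mul_left _
  refine hasDerivAt_tsum_of_isPreconnected (t := Ioo (-1 : ℝ) (1 / 2)) (y₀ := 0)
    (g := fun (m : ℕ) v => (-1) ^ k * (a m * ∏ j ∈ Finset.range k, (α * (m : ℝ) - (j : ℝ))) *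
      (1 - v) ^ (α * m - k))
    (g' := fun (m : ℕ) v => (-1) ^ (k + 1) *
      (a m * ∏ j ∈ Finset.range (k + 1), (α * (m : ℝ) - (j : ℝ))) *
      (1 - v) ^ (α * m - (k + 1 : ℕ)))
    hbound isOpen_Ioo isPreconnected_Ioo (fun m v hv => ?_) (fun m v hv => ?_) (by norm_num) ?_ hu
  · have hv0 : 1 - v ≠ 0 := by linarith [hv.2]
    convert! (((hasDerivAt_id v).const_sub 1).rpow_const (p := α * m - k)
      (Or.inl hv0)).const_mul
      ((-1) ^ k * (a m * ∏ j ∈ Finset.range k, (α * (m : ℝ) - (j : ℝ)))) using 1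
    rw [Finset.prod_range_succ, Nat.cast_succ, ← sub_sub, id]
    ring
  · have hx : 1 - v ∈ Ioo (1 / 2 : ℝ) 2 := ⟨by linarith [hv.2], by linarith [hv.1]⟩
    rw [norm_mul, norm_mul, norm_pow, norm_neg, norm_one, one_pow, one_mul, norm_mul]
    simp only [Real.norm_eq_abs]
    calc _ ≤ |a m| * ((k + 1).factorial * Real.exp (k + 1 : ℕ) * Real.exp 1 ^ m) *
          (2 ^ (k + 1) * 2 ^ m) := by
          gcongr
          · exact abs_prod_range_mul_sub_le hα (k + 1) m
          · exact abs_rpow_mul_sub_natCast_le hα hx (k + 1) m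
      _ = _ := by rw [mul_pow]; ring
  · simp only [sub_zero, Real.one_rpow, mul_one]
    exact (summable_abs_mul_prod_range hα ha k).of_abs.mul_left _

theorem iteratedDeriv_tsum_mul_one_sub_rpow_pow (hα : α ∈ Icc (0 : ℝ) 1)
    (ha : ∀ r : ℝ, Summable fun m => |a m| * r ^ m) (k : ℕ) :
    EqOn (iteratedDeriv k fun v : ℝ => ∑' m : ℕ, a m * ((1 - v) ^ α) ^ m)
      (fun v => ∑' m : ℕ, (-1) ^ k * (a m * ∏ j ∈ Finset.range k, (α * (m : ℝ) - (j : ℝ))) *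
        (1 - v) ^ (α * m - k)) (Ioo (-1) (1 / 2)) := by
  induction k with
  | zero =>
    intro v hv
    have hv0 : 0 ≤ 1 - v := by linarith [hv.2]
    simp [Real.rpow_mul_natCast hv0]
  | succ k ih =>
    intro v hv
    rw [iteratedDeriv_succ, (ih.eventuallyEq_of_mem (isOpen_Ioo.mem_nhds hv)).deriv_eq]
    exact (hasDerivAt_tsum_mul_prod_range_mul_rpow hα ha k hv).deriv

end GeneralizedBinomialSeries

/-- For `α, β ∈ (0,1]`, `ξ > 0`, `t ≥ 0`, `n ≥ 0`: the series
`Σ_{m=0}^∞ (−ξt^β)^m/Γ(βm+1) · ∏_{j=0}^{n−1}(αm − j)` converges absolutely, and the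
`n`-th Taylor coefficient at `u = 0` of `u ↦ E_β(−ξ t^β (1−u)^α)` equals
`((−1)^n/n!) Σ_{m=0}^∞ (−ξt^β)^m/Γ(βm+1) · ∏_{j=0}^{n−1}(αm − j)` — the state
probabilities of the space-time fractional Poisson process. -/
theorem space_time_fractional_poisson_state_probabilities (α β ξ t : ℝ) (n : ℕ)
    (hα : α ∈ Set.Ioc (0 : ℝ) 1) (hβ : β ∈ Set.Ioc (0 : ℝ) 1) (hξ : 0 < ξ) (ht : 0 ≤ t) :
    Summable (fun m : ℕ => |(-(ξ * t ^ β)) ^ m / Real.Gamma (β * m + 1) *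
        ∏ j ∈ Finset.range n, (α * (m : ℝ) - (j : ℝ))|) ∧
    (1 / (n.factorial : ℝ)) * iteratedDeriv n
        (fun u : ℝ => mittagLefflerOne β (-(ξ * t ^ β * (1 - u) ^ α))) 0
      = ((-1 : ℝ) ^ n / (n.factorial : ℝ)) * ∑' m : ℕ,
          (-(ξ * t ^ β)) ^ m / Real.Gamma (β * m + 1) *
            ∏ j ∈ Finset.range n, (α * (m : ℝ) - (j : ℝ)) := by
  have hα' : α ∈ Icc (0 : ℝ) 1 := Ioc_subset_Icc_self hα
  set c : ℝ := ξ * t ^ β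
  have ha (r : ℝ) : Summable fun m : ℕ => |(-c) ^ m / Real.Gamma (β * m + 1)| * r ^ m := by
    refine (summable_pow_div_Gamma hβ.1 (|c| * r)).congr fun m => ?_
    have hΓ : 0 < Real.Gamma (β * m + 1) :=
      Real.Gamma_pos_of_pos (by have := hβ.1; positivity)
    rw [abs_div, abs_pow, abs_neg, abs_of_pos hΓ]
    ring
  have hfun : (fun u : ℝ => mittagLefflerOne β (-(c * (1 - u) ^ α))) =
      fun u => ∑' m : ℕ, (-c) ^ m / Real.Gamma (β * m + 1) * ((1 - u) ^ α) ^ m := by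
    funext u
    refine tsum_congr fun m => ?_
    rw [← neg_mul, mul_pow]
    ring
  refine ⟨summable_abs_mul_prod_range hα' ha n, ?_⟩
  rw [hfun, iteratedDeriv_tsum_mul_one_sub_rpow_pow hα' ha n (by norm_num)]
  simp only [sub_zero, Real.one_rpow, mul_one, tsum_mul_left]
  ring
end
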